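/- The edge-crossing equation implies strict global minimality: Let F₁ and F₂ be Minkowski norms on ℝ², let v ∈ ℝ², and let a be an F₁-unit vector and b an F₂-unit vector such that a and v are linearly independent, b and v are linearly independent, and ⟨a, v⟩_a^{F₁} = ⟨b, v⟩_b^{F₂}. Then for every s ≠ 0 one has F₁(a + s·v) + F₂(b − s·v) > F₁(a) + F₂(b) = 2; that is, s = 0 is the unique global minimum point of f(s) = F₁(a + s·v) + F₂(b − s·v). -/

import Mathlib

/-!
The function `G = F²` has positive definite Hessian away from the origin, so it is strictly convex
along every line avoiding the origin and lies strictly above its tangent at `a` there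
(`sq_tangent_lt`). By homogeneity `DG(a) a = 2 G(a)` and `D²G(a)(a, ·) = DG(a)` (Euler), so, for a
unit vector `a` and the linear form `L = ⟨a, ·⟩_a`, the tangent inequality at `λ w` reads
`λ² F(w)² > 2 λ L(w) - 1`. The choice `λ = 1 / F(w)` gives the strict fundamental inequality
`L(w) < F(w)` for `w` not proportional to `a` (`fundamental_lt`). Applied to `w = a + s v` it says
`F(a + s v) > 1 + s ⟨a, v⟩_a`; adding this for `(F₁, a, s)` and `(F₂, b, -s)`, the linear terms
cancel by the edge-crossing equation.
-/

/-- One half of the second Fréchet derivative of `F²` at `y`, evaluated at `(u, w)`: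
the fundamental bilinear form `⟨u,w⟩_y^F` associated to a Minkowski norm. -/
noncomputable def minkHess {V : Type*} [NormedAddCommGroup V] [NormedSpace ℝ V]
    (F : V → ℝ) (y u w : V) : ℝ :=
  (1 / 2) * fderiv ℝ (fun z => fderiv ℝ (fun x => F x ^ 2) z) y u w

/-- `F` is a Minkowski norm on `V`. -/
structure IsMinkowskiNorm {V : Type*} [NormedAddCommGroup V] [NormedSpace ℝ V]
    (F : V → ℝ) : Prop where
  continuous : Continuous F
  nonneg : ∀ y : V, 0 ≤ F y
  pos : ∀ y : V, y ≠ 0 → 0 < F y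
  smooth : ContDiffOn ℝ (⊤ : ℕ∞) F {(0 : V)}ᶜ
  homog : ∀ l : ℝ, 0 ≤ l → ∀ y : V, F (l • y) = l * F y
  posdef : ∀ y : V, y ≠ 0 → ∀ u : V, u ≠ 0 → 0 < minkHess F y u u

namespace IsMinkowskiNorm

variable {V : Type*} [NormedAddCommGroup V] [NormedSpace ℝ V] {F : V → ℝ}

lemma contDiffAt_sq (hF : IsMinkowskiNorm F) {y : V} (hy : y ≠ 0) :
    ContDiffAt ℝ 2 (fun x => F x ^ 2) y := by
  have h : ContDiffAt ℝ (⊤ : ℕ∞) F y :=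
    hF.smooth.contDiffAt (isOpen_compl_singleton.mem_nhds hy)
  exact (h.of_le (WithTop.coe_le_coe.2 le_top)).pow 2

lemma hasFDerivAt_sq (hF : IsMinkowskiNorm F) {y : V} (hy : y ≠ 0) :
    HasFDerivAt (fun x => F x ^ 2) (fderiv ℝ (fun x => F x ^ 2) y) y :=
  ((hF.contDiffAt_sq hy).differentiableAt (by norm_num)).hasFDerivAt

lemma hasFDerivAt_fderiv_sq (hF : IsMinkowskiNorm F) {y : V} (hy : y ≠ 0) :
    HasFDerivAt (fun z => fderiv ℝ (fun x => F x ^ 2) z)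
      (fderiv ℝ (fun z => fderiv ℝ (fun x => F x ^ 2) z) y) y :=
  (((hF.contDiffAt_sq hy).fderiv_right (m := 1) (by norm_num)).differentiableAt
    (by norm_num)).hasFDerivAt

lemma hasDerivAt_line (a u : V) (t : ℝ) : HasDerivAt (fun t : ℝ => a + t • u) u t := by
  simpa using ((hasDerivAt_id t).smul_const u).const_add a

/-- Euler's identity for the function `F²`, homogeneous of degree two. -/
lemma fderiv_sq_self (hF : IsMinkowskiNorm F) {a : V} (ha : a ≠ 0) :
    fderiv ℝ (fun x => F x ^ 2) a a = 2 * F a ^ 2 := by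
  have h1 : HasDerivAt (fun t : ℝ => F (t • a) ^ 2) (fderiv ℝ (fun x => F x ^ 2) a a) 1 := by
    have hl : HasDerivAt (fun t : ℝ => t • a) a 1 := by
      simpa using (hasDerivAt_id (1 : ℝ)).smul_const a
    have hG := hF.hasFDerivAt_sq ha
    rw [← one_smul ℝ a] at hG
    simpa [Function.comp_def] using hG.comp_hasDerivAt (1 : ℝ) hl
  have h2 : HasDerivAt (fun t : ℝ => t ^ 2 * F a ^ 2) (2 * F a ^ 2) 1 := by
    simpa using (hasDerivAt_pow 2 (1 : ℝ)).mul_const (F a ^ 2)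
  refine h1.unique (h2.congr_of_eventuallyEq ?_)
  filter_upwards [lt_mem_nhds (zero_lt_one : (0 : ℝ) < 1)] with t ht
  rw [hF.homog t ht.le, mul_pow]

/-- The derivative of `F²` is positively homogeneous of degree one. -/
lemma fderiv_sq_smul (hF : IsMinkowskiNorm F) {t : ℝ} (ht : 0 < t) (a : V) :
    fderiv ℝ (fun x => F x ^ 2) (t • a) = t • fderiv ℝ (fun x => F x ^ 2) a := by
  have h1 : fderiv ℝ (fun x => F (t • x) ^ 2) a
      = t • fderiv ℝ (fun x => F x ^ 2) (t • a) :=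
    fderiv_comp_smul (f := fun x => F x ^ 2) t
  have h2 : (fun x => F (t • x) ^ 2) = fun x => t ^ 2 • F x ^ 2 := by
    funext x
    rw [hF.homog t ht.le, mul_pow, smul_eq_mul]
  have h3 : fderiv ℝ (fun x => t ^ 2 • F x ^ 2) a = t ^ 2 • fderiv ℝ (fun x => F x ^ 2) a :=
    congrFun (fderiv_const_smul_field (𝕜 := ℝ) (t ^ 2) (f := fun x => F x ^ 2)) a
  rw [h2, h3, sq, mul_smul] at h1
  exact (smul_right_injective _ ht.ne' h1).symm

/-- Euler's identity for the derivative of `F²`, homogeneous of degree one. -/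
lemma minkHess_self (hF : IsMinkowskiNorm F) {a : V} (ha : a ≠ 0) (w : V) :
    minkHess F a a w = (1 / 2) * fderiv ℝ (fun x => F x ^ 2) a w := by
  have h1 : HasDerivAt (fun t : ℝ => fderiv ℝ (fun x => F x ^ 2) (t • a))
      (fderiv ℝ (fun z => fderiv ℝ (fun x => F x ^ 2) z) a a) 1 := by
    have hl : HasDerivAt (fun t : ℝ => t • a) a 1 := by
      simpa using (hasDerivAt_id (1 : ℝ)).smul_const a
    have hG := hF.hasFDerivAt_fderiv_sq ha
    rw [← one_smul ℝ a] at hG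
    simpa [Function.comp_def] using hG.comp_hasDerivAt (1 : ℝ) hl
  have h2 : HasDerivAt (fun t : ℝ => t • fderiv ℝ (fun x => F x ^ 2) a)
      (fderiv ℝ (fun x => F x ^ 2) a) 1 := by
    simpa using (hasDerivAt_id (1 : ℝ)).smul_const (fderiv ℝ (fun x => F x ^ 2) a)
  have h3 : fderiv ℝ (fun z => fderiv ℝ (fun x => F x ^ 2) z) a a
      = fderiv ℝ (fun x => F x ^ 2) a := by
    refine h1.unique (h2.congr_of_eventuallyEq ?_)
    filter_upwards [lt_mem_nhds (zero_lt_one : (0 : ℝ) < 1)] with t ht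
    exact hF.fderiv_sq_smul ht a
  rw [minkHess, h3]

/-- Along a line avoiding the origin, `F²` lies strictly above its tangent. -/
lemma sq_tangent_lt (hF : IsMinkowskiNorm F) {a u : V} (hu : u ≠ 0)
    (hline : ∀ t : ℝ, a + t • u ≠ 0) :
    F a ^ 2 + fderiv ℝ (fun x => F x ^ 2) a u < F (a + u) ^ 2 := by
  have hd1 : ∀ t : ℝ, HasDerivAt (fun t : ℝ => F (a + t • u) ^ 2)
      (fderiv ℝ (fun x => F x ^ 2) (a + t • u) u) t := fun t =>
    HasFDerivAt.comp_hasDerivAt (l := fun x => F x ^ 2) (f := fun t : ℝ => a + t • u) t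
      (hF.hasFDerivAt_sq (hline t)) (hasDerivAt_line a u t)
  have hd2 : ∀ t : ℝ, HasDerivAt (fun t : ℝ => fderiv ℝ (fun x => F x ^ 2) (a + t • u) u)
      (fderiv ℝ (fun z => fderiv ℝ (fun x => F x ^ 2) z) (a + t • u) u u) t := fun t => by
    have h : HasDerivAt (fun t : ℝ => fderiv ℝ (fun x => F x ^ 2) (a + t • u))
        (fderiv ℝ (fun z => fderiv ℝ (fun x => F x ^ 2) z) (a + t • u) u) t :=
      HasFDerivAt.comp_hasDerivAt (l := fun z => fderiv ℝ (fun x => F x ^ 2) z)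
        (f := fun t : ℝ => a + t • u) t
        (hF.hasFDerivAt_fderiv_sq (hline t)) (hasDerivAt_line a u t)
    have h' := h.clm_apply (hasDerivAt_const t u)
    rwa [map_zero, add_zero] at h'
  have hmono : StrictMono fun t : ℝ => fderiv ℝ (fun x => F x ^ 2) (a + t • u) u := by
    refine strictMono_of_deriv_pos fun t => ?_
    have hp := hF.posdef _ (hline t) u hu
    rw [minkHess] at hp
    rw [(hd2 t).deriv]
    linarith
  obtain ⟨c, hc, hceq⟩ := exists_hasDerivAt_eq_slope (fun t : ℝ => F (a + t • u) ^ 2) _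
    (zero_lt_one : (0 : ℝ) < 1) (fun t _ => (hd1 t).continuousAt.continuousWithinAt)
    (fun t _ => hd1 t)
  have hlt := hmono hc.1
  simp only [zero_smul, add_zero, one_smul, sub_zero, div_one] at hlt hceq
  linarith

/-- The strict fundamental inequality `⟨a, w⟩_a < F(w)` for a unit vector `a`, at `w = a + s v`. -/
lemma fundamental_lt (hF : IsMinkowskiNorm F) {a v : V} (ha : F a = 1)
    (hav : LinearIndependent ℝ ![a, v]) {s : ℝ} (hs : s ≠ 0) :
    1 + s * minkHess F a a v < F (a + s • v) := by
  rw [LinearIndependent.pair_iff] at hav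
  have ha0 : a ≠ 0 := fun h => by simpa using (hav 1 0 (by simp [h])).1
  have hw0 : a + s • v ≠ 0 := fun h => hs (hav 1 s (by simpa using h)).2
  have hpos := hF.pos _ hw0
  obtain ⟨r, hr⟩ : ∃ r, r = (F (a + s • v))⁻¹ := ⟨_, rfl⟩
  have hr0 : 0 < r := hr ▸ inv_pos.2 hpos
  have hrF : r * F (a + s • v) = 1 := by rw [hr]; exact inv_mul_cancel₀ hpos.ne'
  have hline : ∀ t : ℝ, a + t • (r • (a + s • v) - a) ≠ 0 := fun t h => by
    have h' := hav (1 + t * (r - 1)) (t * (r * s)) (by rw [← h]; module)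
    have ht : t = 0 := by
      rcases mul_eq_zero.1 h'.2 with h0 | h0
      · exact h0
      · exact absurd h0 (mul_ne_zero hr0.ne' hs)
    simpa [ht] using h'.1
  have hu : r • (a + s • v) - a ≠ 0 := fun h => by
    have h' := hav (r - 1) (r * s) (by rw [← h]; module)
    exact mul_ne_zero hr0.ne' hs h'.2
  have key := hF.sq_tangent_lt hu hline
  rw [add_sub_cancel, hF.homog r hr0.le, hrF, map_sub, map_smul, map_add, map_smul,
    hF.fderiv_sq_self ha0, ha] at key
  simp only [smul_eq_mul] at key
  rw [hF.minkHess_self ha0]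
  refine lt_of_mul_lt_mul_left ?_ hr0.le
  rw [hrF]
  linarith

end IsMinkowskiNorm

/-- The edge-crossing equation implies strict global minimality. -/
theorem edge_crossing_strict_global_min
    (F₁ F₂ : EuclideanSpace ℝ (Fin 2) → ℝ)
    (hF₁ : IsMinkowskiNorm F₁) (hF₂ : IsMinkowskiNorm F₂)
    (v a b : EuclideanSpace ℝ (Fin 2))
    (ha : F₁ a = 1) (hb : F₂ b = 1)
    (hav : LinearIndependent ℝ ![a, v]) (hbv : LinearIndependent ℝ ![b, v])
    (hcross : minkHess F₁ a a v = minkHess F₂ b b v) :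
    ∀ s : ℝ, s ≠ 0 → F₁ a + F₂ b < F₁ (a + s • v) + F₂ (b - s • v) ∧
      F₁ a + F₂ b = 2 := by
  intro s hs
  have h1 := hF₁.fundamental_lt ha hav hs
  have h2 := hF₂.fundamental_lt hb hbv (neg_ne_zero.2 hs)
  rw [neg_smul, ← sub_eq_add_neg, ← hcross] at h2
  rw [ha, hb]
  constructor <;> linarith
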